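/- Assume 0 ∈ Ω and the open ball B_ε(0) is contained in Ω. Then there exists a unique σ ∈ (0,1) such that ∫_{Ω_σ} φ_ε(x)² dx = (1/2) ∫_Ω φ_ε(x)² dx, where Ω_σ = {x ∈ Ω : φ_ε(x) > σ ε^{−N}}. -/

import Mathlib

open MeasureTheory Filter Topology Bornology

noncomputable section

abbrev RD (N : ℕ) := EuclideanSpace ℝ (Fin N)

/-- The region `ℝ^{2N} ∖ (Ωᶜ × Ωᶜ)` of integration for the fractional Neumann form. -/
def crossSet {N : ℕ} (Ω : Set (RD N)) : Set (RD N × RD N) := {p | p.1 ∈ Ω ∨ p.2 ∈ Ω}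

/-- The bilinear form `⟨u,v⟩_{ε,s}`. -/
def fracPairing (N : ℕ) (CNs ε s : ℝ) (Ω : Set (RD N)) (u v : RD N → ℝ) : ℝ :=
  CNs * ε ^ (2 * s) / 2 *
      ∫ p in crossSet Ω, (u p.1 - u p.2) * (v p.1 - v p.2) / ‖p.1 - p.2‖ ^ ((N : ℝ) + 2 * s)
    + ∫ x in Ω, u x * v x

/-- Membership in the space `H^s_ε(Ω)`: measurability together with finiteness of
`⟨u,u⟩_{ε,s}` (expressed as integrability of the nonnegative integrands). -/
def memHs (N : ℕ) (CNs ε s : ℝ) (Ω : Set (RD N)) (u : RD N → ℝ) : Prop :=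
  Measurable u ∧
    IntegrableOn (fun p : RD N × RD N =>
      (u p.1 - u p.2) ^ 2 / ‖p.1 - p.2‖ ^ ((N : ℝ) + 2 * s)) (crossSet Ω) volume ∧
    IntegrableOn (fun x => (u x) ^ 2) Ω volume

/-- `F(t) = ∫_0^t f(τ) dτ`. -/
def primF (f : ℝ → ℝ) (t : ℝ) : ℝ := ∫ τ in (0:ℝ)..t, f τ

/-- The energy functional `I_ε`. -/
def energy (N : ℕ) (CNs ε s : ℝ) (Ω : Set (RD N)) (f : ℝ → ℝ) (u : RD N → ℝ) : ℝ :=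
  (1 / 2) * fracPairing N CNs ε s Ω u u - ∫ x in Ω, primF f (u x)

/-- Weak solution of the fractional Neumann problem. -/
def isWeakSolution (N : ℕ) (CNs ε s : ℝ) (Ω : Set (RD N)) (f : ℝ → ℝ) (u : RD N → ℝ) : Prop :=
  memHs N CNs ε s Ω u ∧
    ∀ v : RD N → ℝ, memHs N CNs ε s Ω v →
      fracPairing N CNs ε s Ω u v = ∫ x in Ω, f (u x) * v x

def cond_f1 (f : ℝ → ℝ) : Prop := (∀ t < (0:ℝ), f t = 0) ∧ ∀ t > (0:ℝ), 0 < f t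

def cond_f2 (f : ℝ → ℝ) (p : ℝ) : Prop :=
  Tendsto (fun t => f t / t) (𝓝[>] (0:ℝ)) (𝓝 0) ∧
    Tendsto (fun t => f t / t ^ (p - 1)) atTop (𝓝 0)

def cond_f3 (f : ℝ → ℝ) : Prop := Tendsto (fun t => f t / t) atTop atTop

def cond_f4 (f : ℝ → ℝ) : Prop :=
  ∃ θ > (2:ℝ), ∃ a₃ ≥ (0:ℝ), ∀ t ≥ a₃, 0 < θ * primF f t ∧ θ * primF f t ≤ t * f t

def cond_f5 (f : ℝ → ℝ) : Prop :=
  ∃ α > (0:ℝ), ∀ t > (0:ℝ), f t = t → α ≤ t ^ 2 / 2 - primF f t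

/-- The test function `φ_ε`. -/
def phiTest (N : ℕ) (ε : ℝ) (x : RD N) : ℝ :=
  if ‖x‖ ≤ ε then (ε ^ N)⁻¹ * (1 - ‖x‖ / ε) else 0

/-!
The mass carried by `Ω_σ` is a continuous function of `σ`, because the positive level sets of `φ_ε`
are spheres and hence null, and it is strictly decreasing, because between two levels there is
always a nonempty open set of points. It falls from the full mass of `φ_ε²` at `σ = 0` to `0` at
`σ = 1`, so it takes every intermediate value exactly once.
-/

section Superlevel

variable {X : Type*} [MeasurableSpace X] {μ : Measure X} {f : X → ℝ}

theorem continuousAt_setIntegral_superlevel {F : Type*} [NormedAddCommGroup F] [NormedSpace ℝ F]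
    {g : X → F} (hf : Measurable f) (hg : Integrable g μ) {t : ℝ}
    (hlevel : ∀ᵐ x ∂μ, f x = t → g x = 0) :
    ContinuousAt (fun s => ∫ x in {x | s < f x}, g x ∂μ) t := by
  have hmeas (s : ℝ) : MeasurableSet {x | s < f x} := measurableSet_lt measurable_const hf
  simp only [← integral_indicator (hmeas _)]
  refine continuousAt_of_dominated
    (.of_forall fun s => (hg.indicator (hmeas s)).aestronglyMeasurable)
    (.of_forall fun s => .of_forall fun x => norm_indicator_le_norm_self g x) hg.norm ?_
  filter_upwards [hlevel] with x hx
  rcases lt_trichotomy (f x) t with hlt | heq | hgt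
  · refine continuousAt_const.congr (f := fun _ => 0) ?_
    filter_upwards [lt_mem_nhds hlt] with s hs
    exact (Set.indicator_of_notMem (s := {x | s < f x}) hs.not_gt g).symm
  · simp only [Set.indicator_apply, hx heq, ite_self]
    exact continuousAt_const
  · refine continuousAt_const.congr (f := fun _ => g x) ?_
    filter_upwards [gt_mem_nhds hgt] with s hs
    exact (Set.indicator_of_mem (s := {x | s < f x}) hs g).symm

variable [TopologicalSpace X] [PreconnectedSpace X] [OpensMeasurableSpace X] [μ.IsOpenPosMeasure]
  {g : X → ℝ} {a b : X}

theorem strictAntiOn_setIntegral_superlevel (hf : Continuous f) (hg : Integrable g μ)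
    (hpos : ∀ x, f a < f x → 0 < g x) :
    StrictAntiOn (fun s => ∫ x in {x | s < f x}, g x ∂μ) (Set.Icc (f a) (f b)) := by
  intro s hs t ht hst
  have hmeas (r : ℝ) : MeasurableSet {x | r < f x} := (isOpen_lt continuous_const hf).measurableSet
  have hsdiff : ∫ x in {x | s < f x} \ {x | t < f x}, g x ∂μ =
      ∫ x in {x | s < f x}, g x ∂μ - ∫ x in {x | t < f x}, g x ∂μ :=
    setIntegral_sdiff (hmeas t) hg.integrableOn fun x hx => hst.trans hx
  have hne : {x | s < f x ∧ f x < t}.Nonempty := by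
    obtain ⟨r, hsr, hrt⟩ := exists_between hst
    obtain ⟨x, rfl⟩ := mem_range_of_exists_le_of_exists_ge hf
      ⟨a, hs.1.trans hsr.le⟩ ⟨b, hrt.le.trans ht.2⟩
    exact ⟨x, hsr, hrt⟩
  have hopen : IsOpen {x | s < f x ∧ f x < t} :=
    (isOpen_lt continuous_const hf).inter (isOpen_lt hf continuous_const)
  have hgpos {x : X} (hx : s < f x) : 0 < g x := hpos x (hs.1.trans_lt hx)
  have hmass : 0 < ∫ x in {x | s < f x} \ {x | t < f x}, g x ∂μ := by
    rw [setIntegral_pos_iff_support_of_nonneg_ae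
      (ae_restrict_of_forall_mem ((hmeas s).diff (hmeas t)) fun x hx => (hgpos hx.1).le)
      hg.integrableOn]
    exact (hopen.measure_pos μ hne).trans_le
      (measure_mono fun x hx => ⟨(hgpos hx.1).ne', hx.1, hx.2.not_gt⟩)
  exact sub_pos.1 (hsdiff ▸ hmass)

theorem existsUnique_setIntegral_superlevel_eq_mul (hf : Continuous f) (hg : Integrable g μ)
    (hmin : ∀ x, f a ≤ f x) (hmax : ∀ x, f x ≤ f b) (hab : f a < f b)
    (hpos : ∀ x, f a < f x → 0 < g x) (hlevel : ∀ t, ∀ᵐ x ∂μ, f x = t → g x = 0)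
    {θ : ℝ} (hθ : θ ∈ Set.Ioo (0 : ℝ) 1) :
    ∃! t, t ∈ Set.Ioo (f a) (f b) ∧ ∫ x in {x | t < f x}, g x ∂μ = θ * ∫ x, g x ∂μ := by
  let mass (t : ℝ) : ℝ := ∫ x in {x | t < f x}, g x ∂μ
  have hcont : Continuous mass := continuous_iff_continuousAt.2 fun t =>
    continuousAt_setIntegral_superlevel hf.measurable hg (hlevel t)
  have hanti : StrictAntiOn mass (Set.Icc (f a) (f b)) :=
    strictAntiOn_setIntegral_superlevel hf hg hpos
  have hbot : mass (f a) = ∫ x, g x ∂μ := by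
    refine setIntegral_eq_integral_of_ae_compl_eq_zero ?_
    filter_upwards [hlevel (f a)] with x hx hxa
    exact hx ((not_lt.1 hxa).antisymm (hmin x))
  have htop : mass (f b) = 0 := by
    have hempty : {x | f b < f x} = ∅ := Set.eq_empty_of_forall_notMem fun x => (hmax x).not_gt
    simp only [mass, hempty, setIntegral_empty]
  have htotal : 0 < ∫ x, g x ∂μ := by
    rw [← hbot, ← htop]
    exact hanti (Set.left_mem_Icc.2 hab.le) (Set.right_mem_Icc.2 hab.le) hab
  have hvalue : θ * ∫ x, g x ∂μ ∈ Set.Ioo (mass (f b)) (mass (f a)) := by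
    rw [hbot, htop]
    exact ⟨mul_pos hθ.1 htotal, mul_lt_of_lt_one_left htotal hθ.2⟩
  obtain ⟨t, ht, hmass⟩ := intermediate_value_Ioo' hab.le hcont.continuousOn hvalue
  refine ⟨t, ⟨ht, hmass⟩, fun s ⟨hs, hs_mass⟩ => ?_⟩
  exact hanti.injOn (Set.Ioo_subset_Icc_self hs) (Set.Ioo_subset_Icc_self ht)
    (hs_mass.trans hmass.symm)

end Superlevel

section Tent

variable {E : Type*} [SeminormedAddCommGroup E]

/-- The radial tent of height `1` supported in the closed ball of radius `ε` about the origin. It is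
`ε ^ N * φ_ε`, written with a maximum so that its continuity is apparent. -/
def tent (ε : ℝ) (x : E) : ℝ := max 0 (1 - ‖x‖ / ε)

theorem continuous_tent (ε : ℝ) : Continuous (tent ε : E → ℝ) := by
  unfold tent
  fun_prop

theorem tent_nonneg (ε : ℝ) (x : E) : 0 ≤ tent ε x := le_max_left _ _

theorem tent_zero (ε : ℝ) : tent ε (0 : E) = 1 := by
  simp [tent]

variable {ε : ℝ}

theorem tent_le_one (hε : 0 ≤ ε) (x : E) : tent ε x ≤ 1 :=
  max_le zero_le_one (sub_le_self 1 (by positivity))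

theorem tent_eq_zero_iff (hε : 0 < ε) {x : E} : tent ε x = 0 ↔ ε ≤ ‖x‖ := by
  rw [tent, max_eq_left_iff, sub_nonpos, one_le_div hε]

theorem norm_eq_of_tent_eq (hε : ε ≠ 0) {x : E} {t : ℝ} (ht : 0 < t) (hx : tent ε x = t) :
    ‖x‖ = (1 - t) * ε := by
  have hmax : 1 - ‖x‖ / ε = t := by
    rcases max_choice 0 (1 - ‖x‖ / ε) with h | h
    · exact absurd (h.symm.trans hx) ht.ne
    · exact h.symm.trans hx
  rw [← div_eq_iff hε]
  linarith

theorem hasCompactSupport_tent [ProperSpace E] (hε : 0 < ε) :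
    HasCompactSupport (tent ε : E → ℝ) := by
  refine .intro (isCompact_closedBall 0 ε) fun x hx => (tent_eq_zero_iff hε).2 ?_
  rw [mem_closedBall_zero_iff, not_le] at hx
  exact hx.le

theorem ae_tent_ne {V : Type*} [NormedAddCommGroup V] [NormedSpace ℝ V] [Nontrivial V]
    [FiniteDimensional ℝ V] [MeasurableSpace V] [BorelSpace V] (μ : Measure V) [μ.IsAddHaarMeasure]
    (hε : ε ≠ 0) {t : ℝ} (ht : 0 < t) :
    ∀ᵐ x ∂μ, tent ε x ≠ t :=
  measure_mono_null
    (fun _ hx => mem_sphere_zero_iff_norm.2 (norm_eq_of_tent_eq hε ht (not_not.1 hx)))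
    (Measure.addHaar_sphere μ (0 : V) ((1 - t) * ε))

end Tent

section PhiTest

variable {N : ℕ} {ε : ℝ}

theorem phiTest_eq_tent (hε : 0 < ε) (x : RD N) : phiTest N ε x = (ε ^ N)⁻¹ * tent ε x := by
  unfold phiTest
  split_ifs with hx
  · rw [tent, max_eq_right (sub_nonneg.2 ((div_le_one hε).2 hx))]
  · rw [(tent_eq_zero_iff hε).2 (not_le.1 hx).le, mul_zero]

theorem phiTest_gt_iff (hε : 0 < ε) {x : RD N} {σ : ℝ} :
    phiTest N ε x > σ * (ε ^ N)⁻¹ ↔ σ < tent ε x := by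
  rw [phiTest_eq_tent hε, gt_iff_lt, mul_comm σ, mul_lt_mul_iff_right₀ (by positivity)]

theorem integrable_phiTest_sq (hε : 0 < ε) : Integrable fun x : RD N => phiTest N ε x ^ 2 := by
  let scaledSq (y : ℝ) : ℝ := ((ε ^ N)⁻¹ * y) ^ 2
  have hcont : Continuous scaledSq := by fun_prop
  have hcomp : (fun x : RD N => phiTest N ε x ^ 2) = scaledSq ∘ tent ε :=
    funext fun x => by rw [phiTest_eq_tent hε, Function.comp_apply]
  rw [hcomp]
  exact (hcont.comp (continuous_tent ε)).integrable_of_hasCompactSupport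
    ((hasCompactSupport_tent hε).comp_left (by simp [scaledSq]))

theorem ae_tent_eq_imp_phiTest_sq_eq_zero (hN : 0 < N) (hε : 0 < ε) (t : ℝ) :
    ∀ᵐ x : RD N, tent ε x = t → phiTest N ε x ^ 2 = 0 := by
  have : Nonempty (Fin N) := ⟨⟨0, hN⟩⟩
  rcases le_or_gt t 0 with ht | ht
  · refine .of_forall fun x hx => ?_
    have hx_zero : tent ε x = 0 := (hx.trans_le ht).antisymm (tent_nonneg ε x)
    simp only [phiTest_eq_tent hε, hx_zero, mul_zero, zero_pow two_ne_zero]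
  · filter_upwards [ae_tent_ne volume hε.ne' ht] with x hx heq
    exact absurd heq hx

theorem existsUnique_setIntegral_phiTest_sq_eq_mul (hN : 0 < N) (hε : 0 < ε) {θ : ℝ}
    (hθ : θ ∈ Set.Ioo (0 : ℝ) 1) :
    ∃! σ : ℝ, σ ∈ Set.Ioo (0 : ℝ) 1 ∧
      ∫ x in {x : RD N | σ < tent ε x}, phiTest N ε x ^ 2 = θ * ∫ x, phiTest N ε x ^ 2 := by
  have : Nonempty (Fin N) := ⟨⟨0, hN⟩⟩
  obtain ⟨a, ha⟩ := exists_norm_eq (RD N) hε.le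
  have ha_tent : tent ε a = 0 := (tent_eq_zero_iff hε).2 ha.ge
  have hpos (x : RD N) (hx : tent ε a < tent ε x) : 0 < phiTest N ε x ^ 2 := by
    rw [ha_tent] at hx
    rw [phiTest_eq_tent hε]
    positivity
  simpa only [ha_tent, tent_zero] using
    existsUnique_setIntegral_superlevel_eq_mul (a := a) (b := 0) (continuous_tent ε)
      (integrable_phiTest_sq hε) (by simpa only [ha_tent] using tent_nonneg ε)
      (by simpa only [tent_zero] using tent_le_one hε.le)
      (by simp only [ha_tent, tent_zero, one_pos]) hpos
      (ae_tent_eq_imp_phiTest_sq_eq_zero hN hε) hθ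

theorem statement6_general (hN : 0 < N) (hε : 0 < ε) {Ω : Set (RD N)}
    (hball : Metric.ball (0 : RD N) ε ⊆ Ω) {θ : ℝ} (hθ : θ ∈ Set.Ioo (0 : ℝ) 1) :
    ∃! σ : ℝ, σ ∈ Set.Ioo (0 : ℝ) 1 ∧
      ∫ x in {x ∈ Ω | phiTest N ε x > σ * (ε ^ N)⁻¹}, phiTest N ε x ^ 2 =
        θ * ∫ x in Ω, phiTest N ε x ^ 2 := by
  have htent {x : RD N} (hx : x ∉ Ω) : tent ε x = 0 :=
    (tent_eq_zero_iff hε).2 (not_lt.1 fun h => hx (hball (mem_ball_zero_iff.2 h)))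
  have hsuperlevel {σ : ℝ} (hσ : σ ∈ Set.Ioo (0 : ℝ) 1) :
      {x ∈ Ω | phiTest N ε x > σ * (ε ^ N)⁻¹} = {x | σ < tent ε x} := by
    simp only [phiTest_gt_iff hε]
    refine Set.sep_eq_of_subset fun x hx => ?_
    by_contra hxΩ
    exact hσ.1.not_gt (htent hxΩ ▸ hx)
  have htotal : ∫ x in Ω, phiTest N ε x ^ 2 = ∫ x, phiTest N ε x ^ 2 :=
    setIntegral_eq_integral_of_forall_compl_eq_zero fun x hx => by
      rw [phiTest_eq_tent hε, htent hx, mul_zero, zero_pow two_ne_zero]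
  refine (existsUnique_congr fun σ => and_congr_right fun hσ => ?_).2
    (existsUnique_setIntegral_phiTest_sq_eq_mul hN hε hθ)
  rw [hsuperlevel hσ, htotal]

end PhiTest

/-- there is a unique `σ ∈ (0,1)` such that the superlevel set
`Ω_σ = {x ∈ Ω : φ_ε(x) > σ ε^{-N}}` carries half of the mass of `φ_ε²`. -/
theorem statement6
    (N : ℕ) (hN : 0 < N) (Ω : Set (RD N)) (hΩo : IsOpen Ω) (hΩb : IsBounded Ω)
    (h0 : (0 : RD N) ∈ Ω) (ε : ℝ) (hε : 0 < ε)
    (hball : Metric.ball (0 : RD N) ε ⊆ Ω) :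
    ∃! σ : ℝ, σ ∈ Set.Ioo (0:ℝ) 1 ∧
      ∫ x in {x ∈ Ω | phiTest N ε x > σ * (ε ^ N)⁻¹}, (phiTest N ε x) ^ 2 =
        (1 / 2) * ∫ x in Ω, (phiTest N ε x) ^ 2 := by
  exact statement6_general hN hε hball ⟨by norm_num, by norm_num⟩

end
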